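/- For all a, b, c ∈ ℂ \ (1/2)ℤ, the R-matrix maps satisfy the Yang–Baxter (braid) relation as linear maps V^a ⊗ V^b ⊗ V^c → V^c ⊗ V^b ⊗ V^a: (R_{b,c} ⊗ id_{V^a}) ∘ (id_{V^b} ⊗ R_{a,c}) ∘ (R_{a,b} ⊗ id_{V^c}) = (id_{V^c} ⊗ R_{a,b}) ∘ (R_{a,c} ⊗ id_{V^b}) ∘ (id_{V^a} ⊗ R_{b,c}). -/

import Mathlib

open Complex Finset Filter
open scoped Matrix Kronecker Real

noncomputable section

/-- `ξ^a = exp(π √-1 a / n)` for the `2n`-th root of unity `ξ = exp(π √-1/n)`. -/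
def xic (n : ℕ) (a : ℂ) : ℂ := Complex.exp (Real.pi * Complex.I * a / n)

/-- `{a} = ξ^a - ξ^{-a}`. -/
def qn (n : ℕ) (a : ℂ) : ℂ := xic n a - xic n (-a)

/-- `{k}! = {1}{2}⋯{k}`. -/
def qfac (n : ℕ) (k : ℕ) : ℂ := ∏ j ∈ Finset.range k, qn n ((j : ℂ) + 1)

-- The quantum binomial `[a¦b]`, defined (and nonzero) only when `a - b ∈ {0,1,…,n-1}`.
open Classical in
def qbin (n : ℕ) (a b : ℂ) : ℂ :=
  if h : ∃ k : ℕ, k < n ∧ a - b = (k : ℂ) then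
    ∏ j ∈ Finset.range h.choose, qn n (a - (j : ℂ)) / qn n (a - b - (j : ℂ))
  else 0

/-- `[a] = {a}/{1}`. -/
def qint (n : ℕ) (a : ℂ) : ℂ := qn n a / qn n 1

/-- `a` is not a half-integer. -/
def NotHalfInt (a : ℂ) : Prop := ∀ m : ℤ, a ≠ (m : ℂ) / 2

/-- `x ∈ {0, 1, …, n-1}` (as a complex number). -/
def InZn (n : ℕ) (x : ℂ) : Prop := ∃ k : ℕ, k < n ∧ x = (k : ℂ)

/-- The matrix of `E` on `V^a = ℂ^n`: `E e_j = [j] e_{j-1}` (independent of `a`). -/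
def Emat (n : ℕ) : Matrix (Fin n) (Fin n) ℂ :=
  Matrix.of fun i j => if (j : ℕ) = (i : ℕ) + 1 then qint n ((j : ℕ) : ℂ) else 0

/-- The matrix of `F` on `V^a`: `F e_j = [2a-j] e_{j+1}` (with `e_n = 0`). -/
def Fmat (n : ℕ) (a : ℂ) : Matrix (Fin n) (Fin n) ℂ :=
  Matrix.of fun i j => if (i : ℕ) = (j : ℕ) + 1 then qint n (2 * a - ((j : ℕ) : ℂ)) else 0

/-- The matrix of `K` on `V^a`: `K e_j = ξ^{a-j} e_j`. -/
def Kmat (n : ℕ) (a : ℂ) : Matrix (Fin n) (Fin n) ℂ :=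
  Matrix.of fun i j => if i = j then xic n (a - ((i : ℕ) : ℂ)) else 0

/-- The matrix of `K⁻¹` on `V^a`. -/
def Kinvmat (n : ℕ) (a : ℂ) : Matrix (Fin n) (Fin n) ℂ :=
  Matrix.of fun i j => if i = j then xic n (-(a - ((i : ℕ) : ℂ))) else 0

/-- The `R`-matrix `R_{a,b} : V^a ⊗ V^b → V^b ⊗ V^a`:
`R(e_u ⊗ e_v) = Σ_m {m}! ξ^{2(a-u)(b-v) - m(a-b-u+v) - m(m+1)/2} [u¦u-m] [2b-v¦2b-v-m]
e_{v+m} ⊗ e_{u-m}`; the entry at row `(h,k)`, column `(u,v)` is the coefficient of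
`e_h ⊗ e_k`, nonzero only when `h + k = u + v` and `h ≥ v` (with `m = h - v`). -/
def Rmat (n : ℕ) (a b : ℂ) : Matrix (Fin n × Fin n) (Fin n × Fin n) ℂ :=
  Matrix.of fun p q =>
    if ((p.1 : ℕ) + (p.2 : ℕ) = (q.1 : ℕ) + (q.2 : ℕ)) ∧ ((q.2 : ℕ) ≤ (p.1 : ℕ)) then
      (fun m : ℕ =>
        qfac n m *
        xic n (2 * (a - ((q.1 : ℕ) : ℂ)) * (b - ((q.2 : ℕ) : ℂ))
            - (m : ℂ) * (a - b - ((q.1 : ℕ) : ℂ) + ((q.2 : ℕ) : ℂ))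
            - (m : ℂ) * ((m : ℂ) + 1) / 2) *
        qbin n ((q.1 : ℕ) : ℂ) (((q.1 : ℕ) : ℂ) - (m : ℂ)) *
        qbin n (2 * b - ((q.2 : ℕ) : ℂ)) (2 * b - ((q.2 : ℕ) : ℂ) - (m : ℂ)))
      ((p.1 : ℕ) - (q.2 : ℕ))
    else 0

/-- The Clebsch-Gordan quantum coefficient `C^{a,b,c}_{u,v,t}`. -/
def CG (n : ℕ) (a b c : ℂ) (u v t : ℕ) : ℂ :=
  Complex.exp (Real.pi * Complex.I * (c - a - b) / 2) *
  (-1 : ℂ) ^ ((v : ℤ) - (t : ℤ)) *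
  xic n (((v : ℂ) * (2 * b - (v : ℂ) + 1) - (u : ℂ) * (2 * a - (u : ℂ) + 1)) / 2) *
  (qbin n (2 * c) (2 * c - (t : ℂ)))⁻¹ *
  qbin n (2 * c) (a + b + c - ((n : ℂ) - 1)) *
  ∑ z ∈ Finset.range (t + 1),
    (-1 : ℂ) ^ z * xic n ((2 * (z : ℂ) - (t : ℂ)) * (2 * c - (t : ℂ) + 1) / 2) *
    qbin n (a + b - c) ((u : ℂ) - (z : ℂ)) *
    qbin n (2 * a - (u : ℂ) + (z : ℂ)) (2 * a - (u : ℂ)) *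
    qbin n (2 * b - (v : ℂ) + ((t : ℂ) - (z : ℂ))) (2 * b - (v : ℂ))

-- The inclusion `Y_c^{a,b} : V^c → V^a ⊗ V^b`.
open Classical in
def Yinc (n : ℕ) (a b c : ℂ) : Matrix (Fin n × Fin n) (Fin n) ℂ :=
  Matrix.of fun p t =>
    if ((p.1 : ℕ) : ℂ) + ((p.2 : ℕ) : ℂ) - ((t : ℕ) : ℂ) = a + b - c then
      CG n a b c (p.1 : ℕ) (p.2 : ℕ) (t : ℕ)
    else 0

-- The projection `Y_{a,b}^c : V^a ⊗ V^b → V^c`.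
open Classical in
def Yproj (n : ℕ) (a b c : ℂ) : Matrix (Fin n) (Fin n × Fin n) ℂ :=
  Matrix.of fun t p =>
    if ((p.1 : ℕ) : ℂ) + ((p.2 : ℕ) : ℂ) - ((t : ℕ) : ℂ) = a + b - c then
      CG n ((n : ℂ) - 1 - b) ((n : ℂ) - 1 - a) ((n : ℂ) - 1 - c)
        (n - 1 - (p.2 : ℕ)) (n - 1 - (p.1 : ℕ)) (n - 1 - (t : ℕ))
    else 0

-- Extracts the natural number `k` with `x = k` (0 if there is none).
open Classical in
def natIdx (x : ℂ) : ℕ := if h : ∃ k : ℕ, x = (k : ℂ) then h.choose else 0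

/-- The `SL(2,ℂ)` quantum 6j-symbol `{a b e; d c f}_ξ`. -/
def sixj (n : ℕ) (a b e d c f : ℂ) : ℂ :=
  (-1 : ℂ) ^ (n - 1 + natIdx (a + f - c)) *
  (qbin n (2 * f + (n : ℂ)) (2 * f + 1))⁻¹ *
  (qfac n (natIdx (d + e - c)) * qfac n (natIdx (a + b - e)) /
    (qfac n (natIdx (b + d - f)) * qfac n (natIdx (a + f - c)))) *
  qbin n (2 * e) (a + b + e + 1 - (n : ℂ)) *
  (qbin n (2 * e) (e + c - d))⁻¹ *
  ∑ z ∈ Finset.Icc (natIdx (d + e - c) - natIdx (b + d - f))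
      (min (natIdx (d + e - c)) (natIdx (a + f - c))),
    (-1 : ℂ) ^ z * qbin n (a + f + c + 1) (2 * c + (z : ℂ) + 1) *
    qbin n ((a + c - f) + (z : ℂ)) (a + c - f) *
    qbin n ((b + f - d) + (d + e - c) - (z : ℂ)) (b + f - d) *
    qbin n ((d + c - e) + (z : ℂ)) (d + f - b)

/-- The tetrahedral symbol `{a b e; d c f}_tet = {a b e; d c f}_ξ · [2f+n¦2f+1]`. -/
def sixjtet (n : ℕ) (a b e d c f : ℂ) : ℂ :=
  sixj n a b e d c f * qbin n (2 * f + (n : ℂ)) (2 * f + 1)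

/-- The Lobachevsky function `Λ(x) = -∫_0^x log|2 sin t| dt`. -/
def lob (x : ℝ) : ℝ := -∫ t in (0 : ℝ)..x, Real.log |2 * Real.sin t|

/-- A triple of integers is admissible. -/
def Admissible (n : ℕ) (i j k : ℤ) : Prop :=
  0 < i ∧ 0 < j ∧ 0 < k ∧ i < (n : ℤ) - 1 ∧ j < (n : ℤ) - 1 ∧ k < (n : ℤ) - 1 ∧
  (n : ℤ) - 1 < i + j + k ∧ i + j + k < 2 * ((n : ℤ) - 1) ∧
  0 < i + j - k ∧ 0 < j + k - i ∧ 0 < k + i - j ∧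
  i + j - k < (n : ℤ) - 1 ∧ j + k - i < (n : ℤ) - 1 ∧ k + i - j < (n : ℤ) - 1


/-- `R ⊗ id` acting on the first two factors of `V ⊗ V ⊗ V`. -/
def R12 (n : ℕ) (a b : ℂ) :
    Matrix (Fin n × Fin n × Fin n) (Fin n × Fin n × Fin n) ℂ :=
  Matrix.of fun p q =>
    Rmat n a b (p.1, p.2.1) (q.1, q.2.1) * (if p.2.2 = q.2.2 then 1 else 0)

/-- `id ⊗ R` acting on the last two factors of `V ⊗ V ⊗ V`. -/
def R23 (n : ℕ) (a b : ℂ) :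
    Matrix (Fin n × Fin n × Fin n) (Fin n × Fin n × Fin n) ℂ :=
  Matrix.of fun p q =>
    (if p.1 = q.1 then 1 else 0) * Rmat n a b (p.2.1, p.2.2) (q.2.1, q.2.2)

/-!
By conservation of the total weight, the entry of either side of the braid relation from
`e_u ⊗ e_v ⊗ e_w` to `e_p ⊗ e_q ⊗ e_r` is a sum over a single loop index. Once a factor depending
only on the external indices is removed, both sums satisfy the same Pascal-type recurrence in
`t = u - r`, so they agree, even with `2b - v` replaced by an arbitrary complex number. Loop indices
beyond `n - 1` may be included because a Gaussian binomial `[N¦k]` with `k < n ≤ N < n + k` contains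
the factor `{n} = 0`.
-/

section QuantumIntegers

variable (n : ℕ)

lemma xic_zero : xic n 0 = 1 := by simp [xic]

lemma xic_add (a b : ℂ) : xic n (a + b) = xic n a * xic n b := by
  rw [xic, xic, xic, ← Complex.exp_add]
  ring_nf

lemma xic_mul_xic {a b c : ℂ} (h : a + b = c) : xic n a * xic n b = xic n c := by
  rw [← h, xic_add]

lemma qn_zero : qn n 0 = 0 := by simp [qn]

lemma qn_add (a b : ℂ) : qn n (a + b) = xic n a * qn n b + xic n (-b) * qn n a := by
  simp only [qn, mul_sub, ← xic_add]
  ring_nf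

variable {n}

lemma qn_natCast_eq_zero_iff (hn : n ≠ 0) (k : ℕ) : qn n k = 0 ↔ n ∣ k := by
  have hsq : xic n (-(k : ℂ)) * Complex.exp (2 * π * Complex.I / n) ^ k = xic n k := by
    rw [xic, xic, ← Complex.exp_nat_mul, ← Complex.exp_add]
    ring_nf
  have hne : xic n (-(k : ℂ)) ≠ 0 := Complex.exp_ne_zero _
  rw [← (Complex.isPrimitiveRoot_exp n hn).pow_eq_one_iff_dvd, qn, sub_eq_zero, ← hsq,
    mul_eq_left₀ hne]

lemma qfac_succ (k : ℕ) : qfac n (k + 1) = qfac n k * qn n (k + 1) :=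
  Finset.prod_range_succ _ _

lemma qfac_ne_zero {k : ℕ} (hk : k < n) : qfac n k ≠ 0 := by
  refine Finset.prod_ne_zero_iff.mpr fun j hj ↦ ?_
  have hj := Finset.mem_range.mp hj
  rw [← Nat.cast_succ, Ne, qn_natCast_eq_zero_iff (by omega)]
  exact Nat.not_dvd_of_pos_of_lt j.succ_pos (by omega)

variable (n)

/-- The falling product `{a, a-k} = {a}{a-1}⋯{a-k+1}`. -/
def qdesc (a : ℂ) (k : ℕ) : ℂ := ∏ j ∈ Finset.range k, qn n (a - j)

lemma qdesc_zero (a : ℂ) : qdesc n a 0 = 1 := Finset.prod_range_zero _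

lemma qdesc_add (a : ℂ) (k l : ℕ) : qdesc n a (k + l) = qdesc n a k * qdesc n (a - k) l := by
  simp only [qdesc, Finset.prod_range_add, Nat.cast_add, sub_sub]

lemma qdesc_succ (a : ℂ) (k : ℕ) : qdesc n a (k + 1) = qn n a * qdesc n (a - 1) k := by
  rw [add_comm, qdesc_add]
  simp [qdesc]

lemma qdesc_self (k : ℕ) : qdesc n k k = qfac n k := by
  induction k with
  | zero => simp [qdesc, qfac]
  | succ k ih => rw [qdesc_succ, qfac_succ, Nat.cast_succ, add_sub_cancel_right, ih, mul_comm]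

end QuantumIntegers

section GaussianBinomials

/-- The Gaussian binomial `[v¦s]`, symmetric under `ξ ↦ ξ⁻¹`, for a natural number `v` and an
integer `s`; it vanishes unless `0 ≤ s ≤ v`. The Pascal rule is used as the definition so that it
keeps its generic value for `v ≥ n`, where the quotient of falling products may be `0 / 0`. -/
def gaussBinom (n : ℕ) : ℕ → ℤ → ℂ
  | 0, s => if s = 0 then 1 else 0
  | v + 1, s => xic n s * gaussBinom n v s + xic n (s - (v + 1)) * gaussBinom n v (s - 1)

variable (n : ℕ)

lemma gaussBinom_zero_left (s : ℤ) : gaussBinom n 0 s = if s = 0 then 1 else 0 := by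
  rw [gaussBinom]

lemma gaussBinom_succ (v : ℕ) (s : ℤ) : gaussBinom n (v + 1) s =
    xic n s * gaussBinom n v s + xic n (s - (v + 1)) * gaussBinom n v (s - 1) := by
  rw [gaussBinom]

lemma gaussBinom_of_neg (v : ℕ) {s : ℤ} (hs : s < 0) : gaussBinom n v s = 0 := by
  induction v generalizing s with
  | zero => rw [gaussBinom_zero_left, if_neg hs.ne]
  | succ v ih => rw [gaussBinom_succ, ih hs, ih (by omega), mul_zero, mul_zero, add_zero]

lemma gaussBinom_of_lt {v : ℕ} {s : ℤ} (hs : v < s) : gaussBinom n v s = 0 := by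
  induction v generalizing s with
  | zero => rw [gaussBinom_zero_left, if_neg (by omega)]
  | succ v ih => rw [gaussBinom_succ, ih (by omega), ih (by omega), mul_zero, mul_zero, add_zero]

lemma exists_eq_natCast_of_gaussBinom_ne_zero {v : ℕ} {s : ℤ} (h : gaussBinom n v s ≠ 0) :
    ∃ j : ℕ, s = j ∧ j ≤ v := by
  have h₀ : 0 ≤ s := not_lt.mp fun hs ↦ h (gaussBinom_of_neg n v hs)
  have hv : s ≤ v := not_lt.mp fun hs ↦ h (gaussBinom_of_lt n hs)
  lift s to ℕ using h₀
  exact ⟨s, rfl, by omega⟩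

lemma gaussBinom_zero_right (v : ℕ) : gaussBinom n v 0 = 1 := by
  induction v with
  | zero => rw [gaussBinom_zero_left, if_pos rfl]
  | succ v ih =>
    rw [gaussBinom_succ, ih, gaussBinom_of_neg n v (by omega), Int.cast_zero, xic_zero]
    ring

lemma qn_mul_gaussBinom (v : ℕ) (s : ℤ) :
    qn n s * gaussBinom n v s = qn n (v + 1 - s) * gaussBinom n v (s - 1) := by
  induction v generalizing s with
  | zero =>
    rcases eq_or_ne s 0 with rfl | h₀
    · simp [gaussBinom_zero_left, qn_zero]
    · rcases eq_or_ne s 1 with rfl | h₁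
      · simp [gaussBinom_zero_left, qn_zero]
      · simp [gaussBinom_zero_left, h₀, sub_eq_zero, h₁]
  | succ v ih =>
    have absorb := ih s
    have absorb' := ih (s - 1)
    have split := qn_add n s (v + 1 - s)
    have split' := qn_add n (s - 1) (v + 1 - (s - 1))
    rw [add_sub_cancel, neg_sub] at split split'
    rw [gaussBinom_succ, gaussBinom_succ]
    push_cast at absorb' ⊢
    rw [show (v : ℂ) + 1 + 1 - s = v + 1 - (s - 1) by ring]
    linear_combination xic n s * absorb + xic n (s - 1 - (v + 1)) * absorb'
      - gaussBinom n v (s - 1) * (split - split')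

lemma gaussBinom_succ' (v : ℕ) (s : ℤ) : gaussBinom n (v + 1) s =
    xic n (-s) * gaussBinom n v s + xic n (v + 1 - s) * gaussBinom n v (s - 1) := by
  have absorb := qn_mul_gaussBinom n v s
  rw [qn, qn, neg_sub] at absorb
  rw [gaussBinom_succ]
  linear_combination absorb

lemma qn_mul_gaussBinom_succ (v : ℕ) (s : ℤ) :
    qn n s * gaussBinom n (v + 1) s = qn n (v + 1) * gaussBinom n v (s - 1) := by
  have split := qn_add n s (v + 1 - s)
  rw [add_sub_cancel, neg_sub] at split
  rw [gaussBinom_succ]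
  linear_combination xic n s * qn_mul_gaussBinom n v s - gaussBinom n v (s - 1) * split

lemma gaussBinom_symm (v : ℕ) (s : ℤ) : gaussBinom n v (v - s) = gaussBinom n v s := by
  induction v generalizing s with
  | zero => simp [gaussBinom_zero_left]
  | succ v ih =>
    have hs := ih s
    have hs' := ih (s - 1)
    rw [show (v : ℤ) - (s - 1) = v + 1 - s by ring] at hs'
    rw [gaussBinom_succ', gaussBinom_succ]
    push_cast
    rw [hs', show (v : ℤ) + 1 - s - 1 = v - s by ring, hs, neg_sub, sub_sub_cancel, add_comm]

lemma gaussBinom_mul_qfac (u k : ℕ) : gaussBinom n u k * qfac n k = qdesc n u k := by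
  induction k generalizing u with
  | zero => simp [gaussBinom_zero_right, qfac, qdesc_zero]
  | succ k ih =>
    cases u with
    | zero => simp [gaussBinom_zero_left, qdesc_succ, qn_zero, show (k : ℤ) + 1 ≠ 0 by omega]
    | succ u =>
      have absorb := qn_mul_gaussBinom_succ n u (k + 1)
      push_cast at absorb ⊢
      rw [add_sub_cancel_right] at absorb
      rw [qfac_succ, qdesc_succ, add_sub_cancel_right, ← ih]
      linear_combination qfac n k * absorb

lemma qfac_add (k l : ℕ) : qfac n (k + l) = gaussBinom n (k + l) k * (qfac n k * qfac n l) := by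
  rw [← mul_assoc, gaussBinom_mul_qfac, ← qdesc_self, qdesc_add, ← qdesc_self n l]
  simp

variable {n}

lemma gaussBinom_mul_gaussBinom (r : ℕ) {k l : ℕ} (h : k + l < n) :
    gaussBinom n (r + l + k) k * gaussBinom n (r + l) l =
      gaussBinom n (r + l + k) (k + l : ℕ) * gaussBinom n (k + l) k := by
  have hne : qfac n k * qfac n l ≠ 0 :=
    mul_ne_zero (qfac_ne_zero (by omega)) (qfac_ne_zero (by omega))
  refine mul_right_cancel₀ hne ?_
  calc gaussBinom n (r + l + k) k * gaussBinom n (r + l) l * (qfac n k * qfac n l)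
      = gaussBinom n (r + l + k) k * qfac n k * (gaussBinom n (r + l) l * qfac n l) := by ring
    _ = qdesc n (r + l + k : ℕ) (k + l) := by
      rw [gaussBinom_mul_qfac, gaussBinom_mul_qfac, qdesc_add, Nat.cast_add _ k,
        add_sub_cancel_right]
    _ = gaussBinom n (r + l + k) (k + l : ℕ) * gaussBinom n (k + l) k *
        (qfac n k * qfac n l) := by
      rw [mul_assoc, ← qfac_add, gaussBinom_mul_qfac]

lemma gaussBinom_eq_zero_of_le {v k : ℕ} (hv : n ≤ v) (hk : k < n) (hvk : v < n + k) :
    gaussBinom n v k = 0 := by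
  have hdesc : qdesc n v k = 0 := by
    refine Finset.prod_eq_zero (i := v - n) (Finset.mem_range.mpr (by omega)) ?_
    rw [← Nat.cast_sub (Nat.sub_le v n), Nat.sub_sub_self hv,
      qn_natCast_eq_zero_iff (by omega)]
  rw [← gaussBinom_mul_qfac] at hdesc
  exact (mul_eq_zero.mp hdesc).resolve_right (qfac_ne_zero hk)

lemma qbin_mul_qfac (x : ℂ) {k : ℕ} (hk : k < n) :
    qbin n x (x - k) * qfac n k = qdesc n x k := by
  have hex : ∃ l : ℕ, l < n ∧ x - (x - k) = (l : ℂ) := ⟨k, hk, sub_sub_cancel x k⟩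
  have hchoose : hex.choose = k := by
    exact_mod_cast hex.choose_spec.2.symm.trans (sub_sub_cancel x k)
  have hne : qdesc n k k ≠ 0 := qdesc_self n k ▸ qfac_ne_zero hk
  rw [qbin, dif_pos hex, hchoose, Finset.prod_div_distrib, sub_sub_cancel, ← qdesc_self]
  exact div_mul_cancel₀ _ hne

lemma qbin_natCast {k : ℕ} (u : ℕ) (hk : k < n) : qbin n u (u - k) = gaussBinom n u k :=
  mul_right_cancel₀ (qfac_ne_zero hk) <| by rw [qbin_mul_qfac _ hk, gaussBinom_mul_qfac]

end GaussianBinomials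

section BraidSums

variable (n : ℕ)

lemma sum_antidiagonal_gaussBinom_succ_mul (t : ℕ) (f : ℕ → ℕ → ℂ) :
    ∑ p ∈ antidiagonal (t + 1), gaussBinom n (t + 1) p.1 * f p.1 p.2 =
      ∑ p ∈ antidiagonal t, gaussBinom n t p.1 *
        (xic n p.1 * f p.1 (p.2 + 1) + xic n (-p.2) * f (p.1 + 1) p.2) := by
  simp only [gaussBinom_succ, add_mul, mul_add, Finset.sum_add_distrib]
  congr 1
  · rw [Finset.Nat.sum_antidiagonal_succ', gaussBinom_of_lt n (by push_cast; omega)]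
    simp only [mul_zero, zero_mul, zero_add, Int.cast_natCast]
    exact Finset.sum_congr rfl fun p _ ↦ by ring
  · rw [Finset.Nat.sum_antidiagonal_succ, gaussBinom_of_neg n t (by simp)]
    simp only [mul_zero, zero_mul, zero_add]
    refine Finset.sum_congr rfl fun p hp ↦ ?_
    rw [← HasAntidiagonal.mem_antidiagonal.mp hp]
    push_cast
    ring_nf

lemma sum_antidiagonal_gaussBinom_mul_swap (t : ℕ) (f : ℕ → ℕ → ℂ) :
    ∑ p ∈ antidiagonal t, gaussBinom n t p.1 * f p.1 p.2 =
      ∑ p ∈ antidiagonal t, gaussBinom n t p.1 * f p.2 p.1 := by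
  rw [← Finset.Nat.sum_antidiagonal_swap]
  refine Finset.sum_congr rfl fun p hp ↦ ?_
  rw [Prod.fst_swap, Prod.snd_swap, ← gaussBinom_symm n t p.1,
    ← HasAntidiagonal.mem_antidiagonal.mp hp, Nat.cast_add, add_sub_cancel_left]

lemma sum_antidiagonal_gaussBinom_succ_mul' (t : ℕ) (f : ℕ → ℕ → ℂ) :
    ∑ p ∈ antidiagonal (t + 1), gaussBinom n (t + 1) p.1 * f p.1 p.2 =
      ∑ p ∈ antidiagonal t, gaussBinom n t p.1 *
        (xic n (-p.1) * f p.1 (p.2 + 1) + xic n p.2 * f (p.1 + 1) p.2) := by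
  rw [sum_antidiagonal_gaussBinom_mul_swap,
    sum_antidiagonal_gaussBinom_succ_mul n t fun m i ↦ f i m,
    sum_antidiagonal_gaussBinom_mul_swap n t fun m i ↦
      xic n m * f (i + 1) m + xic n (-i) * f i (m + 1)]
  exact Finset.sum_congr rfl fun p _ ↦ by ring

/-- The sum over the loop index of `(R ⊗ id)(id ⊗ R)(R ⊗ id)`, after removal of the factor
`braidPrefactor`: `t` and `s` are the numbers of steps lost by the first and gained by the last
tensor factor, and `x` stands for `2b - v`. -/
def braidSumLeft (t v : ℕ) (s : ℤ) (x : ℂ) : ℂ :=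
  ∑ p ∈ antidiagonal t, gaussBinom n t p.1 * (gaussBinom n (v + p.2) (s - p.1) *
    xic n (p.1 * (v + t - s - x) - p.1 * (p.1 - 1) / 2) * qdesc n x p.2)

/-- The analogue of `braidSumLeft` for `(id ⊗ R)(R ⊗ id)(id ⊗ R)`. -/
def braidSumRight (t v : ℕ) (s : ℤ) (x : ℂ) : ℂ :=
  ∑ p ∈ antidiagonal t, gaussBinom n t p.1 * (gaussBinom n v (s - p.1) *
    xic n (-(p.1 * (v + t - s - x)) - p.1 * (p.1 - 1) / 2) * qdesc n (x + s - p.1) p.2)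

lemma braidSumLeft_succ (t v : ℕ) (s : ℤ) (x : ℂ) :
    braidSumLeft n (t + 1) v s x = qn n x * braidSumLeft n t (v + 1) s (x - 1) +
      xic n (v + 1 - s - x) * braidSumLeft n t v (s - 1) x := by
  simp only [braidSumLeft, Finset.mul_sum, ← Finset.sum_add_distrib]
  rw [sum_antidiagonal_gaussBinom_succ_mul n t fun m i ↦ gaussBinom n (v + i) (s - m) *
    xic n (m * (v + (t + 1 : ℕ) - s - x) - m * (m - 1) / 2) * qdesc n x i]
  refine Finset.sum_congr rfl ?_
  rintro ⟨m, i⟩ hmi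
  obtain rfl := HasAntidiagonal.mem_antidiagonal.mp hmi
  have exp₁ : xic n m * xic n (m * (v + (m + i + 1) - s - x) - m * (m - 1) / 2) =
      xic n (m * (v + 1 + (m + i) - s - (x - 1)) - m * (m - 1) / 2) := xic_mul_xic n (by ring)
  have exp₂ : xic n (-i) *
      xic n ((m + 1) * (v + (m + i + 1) - s - x) - (m + 1) * (m + 1 - 1) / 2) =
      xic n (v + 1 - s - x) * xic n (m * (v + (m + i) - (s - 1) - x) - m * (m - 1) / 2) := by
    rw [← xic_add, ← xic_add]
    ring_nf
  rw [qdesc_succ, show v + (i + 1) = v + 1 + i by ring]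
  push_cast
  rw [show s - ((m : ℤ) + 1) = s - 1 - m by ring]
  linear_combination gaussBinom n (m + i) m *
    (gaussBinom n (v + 1 + i) (s - m) * qn n x * qdesc n (x - 1) i * exp₁ +
      gaussBinom n (v + i) (s - 1 - m) * qdesc n x i * exp₂)

lemma qn_add_mul_gaussBinom (v : ℕ) (s : ℤ) (x : ℂ) :
    qn n (x + s) * gaussBinom n v s + xic n (x + s - (v + 1)) * gaussBinom n v (s - 1) =
      qn n x * gaussBinom n (v + 1) s + xic n (v + 1 - s - x) * gaussBinom n v (s - 1) := by
  have pascal := gaussBinom_succ n v s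
  have pascal' := gaussBinom_succ' n v s
  have exp₁ := xic_add n x s
  have exp₂ := xic_add n x (s - (v + 1))
  have exp₃ := xic_add n (-x) (-s)
  have exp₄ := xic_add n (-x) (v + 1 - s)
  rw [← add_sub_assoc] at exp₂
  rw [← neg_add] at exp₃
  rw [neg_add_eq_sub] at exp₄
  rw [qn, qn]
  linear_combination -xic n x * pascal + xic n (-x) * pascal' + gaussBinom n v s * (exp₁ - exp₃) +
    gaussBinom n v (s - 1) * (exp₂ - exp₄)

lemma braidSumRight_succ (t v : ℕ) (s : ℤ) (x : ℂ) :
    braidSumRight n (t + 1) v s x = qn n x * braidSumRight n t (v + 1) s (x - 1) +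
      xic n (v + 1 - s - x) * braidSumRight n t v (s - 1) x := by
  simp only [braidSumRight, Finset.mul_sum, ← Finset.sum_add_distrib]
  rw [sum_antidiagonal_gaussBinom_succ_mul' n t fun m i ↦ gaussBinom n v (s - m) *
    xic n (-(m * (v + (t + 1 : ℕ) - s - x)) - m * (m - 1) / 2) * qdesc n (x + s - m) i]
  refine Finset.sum_congr rfl ?_
  rintro ⟨m, i⟩ hmi
  obtain rfl := HasAntidiagonal.mem_antidiagonal.mp hmi
  set E := xic n (-(m * (v + 1 + (m + i) - s - (x - 1))) - m * (m - 1) / 2) with hE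
  have exp₁ : xic n (-m) * xic n (-(m * (v + (m + i + 1) - s - x)) - m * (m - 1) / 2) = E :=
    xic_mul_xic n (by ring)
  have exp₂ : xic n i *
      xic n (-((m + 1) * (v + (m + i + 1) - s - x)) - (m + 1) * (m + 1 - 1) / 2) =
      xic n (x + s - m - (v + 1)) * E := by
    rw [hE, ← xic_add, ← xic_add]
    ring_nf
  have exp₃ : xic n (v + 1 - s - x) *
      xic n (-(m * (v + (m + i) - (s - 1) - x)) - m * (m - 1) / 2) =
      xic n (v + 1 - (s - m) - x) * E := by
    rw [hE, ← xic_add, ← xic_add]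
    ring_nf
  have exchange := qn_add_mul_gaussBinom n v (s - m) x
  rw [qdesc_succ]
  push_cast at exchange ⊢
  rw [← hE, show s - ((m : ℤ) + 1) = s - 1 - m by ring, show x - 1 + s - m = x + s - m - 1 by ring,
    show x + (s - 1) - m = x + s - m - 1 by ring, show x + s - (m + 1) = x + s - m - 1 by ring]
  rw [sub_right_comm, ← add_sub_assoc] at exchange
  linear_combination gaussBinom n (m + i) m * qdesc n (x + s - m - 1) i *
    (gaussBinom n v (s - m) * qn n (x + s - m) * exp₁ +
      gaussBinom n v (s - 1 - m) * (exp₂ - exp₃) + E * exchange)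

theorem braidSumLeft_eq_braidSumRight (t v : ℕ) (s : ℤ) (x : ℂ) :
    braidSumLeft n t v s x = braidSumRight n t v s x := by
  induction t generalizing v s x with
  | zero => simp [braidSumLeft, braidSumRight, qdesc_zero]
  | succ t ih => rw [braidSumLeft_succ, braidSumRight_succ, ih, ih]

end BraidSums

section MatrixEntries

variable {n : ℕ}

/-- The exponent of `ξ` in the `m`-th term of `R (e_u ⊗ e_v)`, in terms of the weights `α = a - u`
and `β = b - v`. -/
def RmatExp (α β m : ℂ) : ℂ := 2 * α * β - m * (α - β) - m * (m + 1) / 2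

/-- The coefficient of `e_{v+m} ⊗ e_{u-m}` in `R_{a,b} (e_u ⊗ e_v)`, with `{m}!` cancelled against
the denominator of the second quantum binomial. -/
def RmatCoeff (n : ℕ) (a b : ℂ) (u v m : ℕ) : ℂ :=
  gaussBinom n u m * qdesc n (2 * b - v) m * xic n (RmatExp (a - u) (b - v) m)

lemma Rmat_apply (a b : ℂ) {p q u v : Fin n} {m : ℕ} (hp : (p : ℕ) = v + m)
    (hu : (u : ℕ) = q + m) : Rmat n a b (p, q) (u, v) = RmatCoeff n a b u v m := by
  have hm : m < n := by omega
  rw [Rmat, Matrix.of_apply]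
  dsimp only
  rw [if_pos (by omega), hp, Nat.add_sub_cancel_left, qbin_natCast _ hm, RmatCoeff,
    ← qbin_mul_qfac _ hm, RmatExp]
  ring_nf

lemma exists_of_Rmat_ne_zero {a b : ℂ} {p q u v : Fin n} (h : Rmat n a b (p, q) (u, v) ≠ 0) :
    ∃ m, (p : ℕ) = v + m ∧ (u : ℕ) = q + m := by
  by_contra! hpq
  refine h (if_neg fun hweight ↦ ?_)
  dsimp only at hweight
  exact hpq (p - v) (by omega) (by omega)

lemma exists_of_Rmat_mul_Rmat_mul_Rmat_ne_zero {a₁ b₁ a₂ b₂ a₃ b₃ : ℂ}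
    {p₁ q₁ u₁ v₁ p₂ q₂ u₂ v₂ p₃ q₃ u₃ v₃ : Fin n}
    (h : Rmat n a₁ b₁ (p₁, q₁) (u₁, v₁) * Rmat n a₂ b₂ (p₂, q₂) (u₂, v₂) *
      Rmat n a₃ b₃ (p₃, q₃) (u₃, v₃) ≠ 0) :
    (∃ m, (p₁ : ℕ) = v₁ + m ∧ (u₁ : ℕ) = q₁ + m) ∧ (∃ m, (p₂ : ℕ) = v₂ + m ∧ (u₂ : ℕ) = q₂ + m) ∧
      ∃ m, (p₃ : ℕ) = v₃ + m ∧ (u₃ : ℕ) = q₃ + m :=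
  ⟨exists_of_Rmat_ne_zero (left_ne_zero_of_mul (left_ne_zero_of_mul h)),
    exists_of_Rmat_ne_zero (right_ne_zero_of_mul (left_ne_zero_of_mul h)),
    exists_of_Rmat_ne_zero (right_ne_zero_of_mul h)⟩

lemma R12_mul_R23_mul_R12_apply (a₁ b₁ a₂ b₂ a₃ b₃ : ℂ) (p q r u v w : Fin n) :
    (R12 n a₁ b₁ * R23 n a₂ b₂ * R12 n a₃ b₃) (p, q, r) (u, v, w) =
      ∑ i : Fin n × Fin n × Fin n, Rmat n a₁ b₁ (p, q) (i.1, i.2.1) *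
        Rmat n a₂ b₂ (i.2.1, r) (i.2.2, w) * Rmat n a₃ b₃ (i.1, i.2.2) (u, v) := by
  simp only [Matrix.mul_apply, R12, R23, Matrix.of_apply, Fintype.sum_prod_type, mul_ite, ite_mul,
    mul_one, one_mul, mul_zero, zero_mul, Finset.sum_mul, Finset.sum_ite_irrel, Finset.sum_ite_eq,
    Finset.sum_ite_eq', Finset.sum_const_zero, Finset.mem_univ, if_true]
  exact Finset.sum_congr rfl fun _ _ ↦ Finset.sum_comm

lemma R23_mul_R12_mul_R23_apply (a₁ b₁ a₂ b₂ a₃ b₃ : ℂ) (p q r u v w : Fin n) :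
    (R23 n a₁ b₁ * R12 n a₂ b₂ * R23 n a₃ b₃) (p, q, r) (u, v, w) =
      ∑ i : Fin n × Fin n × Fin n, Rmat n a₁ b₁ (q, r) (i.2.1, i.2.2) *
        Rmat n a₂ b₂ (p, i.2.1) (u, i.1) * Rmat n a₃ b₃ (i.1, i.2.2) (v, w) := by
  simp only [Matrix.mul_apply, R12, R23, Matrix.of_apply, Fintype.sum_prod_type, mul_ite, ite_mul,
    mul_one, one_mul, mul_zero, zero_mul, Finset.sum_mul, Finset.sum_ite_irrel, Finset.sum_ite_eq,
    Finset.sum_ite_eq', Finset.sum_const_zero, Finset.mem_univ, if_true]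
  exact Finset.sum_congr rfl fun _ _ ↦ Finset.sum_comm

/-- The exponent of `ξ` in `braidPrefactor`, in terms of the weights `α = a - u`, `β = b - v`,
`γ = c - w`. -/
def braidExp (α β γ s t : ℂ) : ℂ :=
  2 * (α * β + α * γ + β * γ) - t * α + (t - s) * β + s * γ - ((t - s) ^ 2 + s + t) / 2

/-- The factor common to all terms, on both sides of the braid relation, of the coefficient of
`e_{w+s} ⊗ e_{v+t-s} ⊗ e_{u-t}` in the image of `e_u ⊗ e_v ⊗ e_w`. -/
def braidPrefactor (n : ℕ) (a b c : ℂ) (u v w s t : ℕ) : ℂ :=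
  gaussBinom n u t * qdesc n (2 * c - w) s * xic n (braidExp (a - u) (b - v) (c - w) s t)

lemma RmatCoeff_mul_left (a b c : ℂ) (v w r : ℕ) {m i : ℕ} (j : ℕ) (h : m + i < n) :
    RmatCoeff n b c (v + i) (w + m) j * RmatCoeff n a c (r + m) w m *
        RmatCoeff n a b (r + (m + i)) v i =
      braidPrefactor n a b c (r + (m + i)) v w (m + j) (m + i) *
        (gaussBinom n (m + i) m * (gaussBinom n (v + i) j *
          xic n (m * (v + (m + i) - (m + j) - (2 * b - v)) - m * (m - 1) / 2) *
            qdesc n (2 * b - v) i)) := by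
  have binom : gaussBinom n (r + (m + i)) i * gaussBinom n (r + m) m =
      gaussBinom n (r + (m + i)) (m + i : ℕ) * gaussBinom n (m + i) m := by
    have symm := gaussBinom_symm n (m + i) m
    rw [Nat.cast_add, add_sub_cancel_left] at symm
    rw [← symm, ← add_assoc, add_comm m i]
    exact gaussBinom_mul_gaussBinom r (add_comm m i ▸ h)
  have desc := qdesc_add n (2 * c - w) m j
  have exps : xic n (RmatExp (b - (v + i)) (c - (w + m)) j) *
      xic n (RmatExp (a - (r + m)) (c - w) m) * xic n (RmatExp (a - (r + (m + i))) (b - v) i) =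
      xic n (braidExp (a - (r + (m + i))) (b - v) (c - w) (m + j) (m + i)) *
        xic n (m * (v + (m + i) - (m + j) - (2 * b - v)) - m * (m - 1) / 2) := by
    simp only [RmatExp, braidExp, ← xic_add]
    ring_nf
  simp only [RmatCoeff, braidPrefactor]
  push_cast at binom exps ⊢
  rw [desc, sub_add_eq_sub_sub (2 * c)]
  calc _ = (gaussBinom n (r + (m + i)) i * gaussBinom n (r + m) m) * gaussBinom n (v + i) j *
          (qdesc n (2 * c - w) m * qdesc n (2 * c - w - m) j) * qdesc n (2 * b - v) i *
          (xic n (RmatExp (b - (v + i)) (c - (w + m)) j) * xic n (RmatExp (a - (r + m)) (c - w) m) *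
            xic n (RmatExp (a - (r + (m + i))) (b - v) i)) := by ring
    _ = _ := by rw [binom, exps]; ring

lemma RmatCoeff_mul_right (a b c : ℂ) (w q r : ℕ) {m i : ℕ} (j : ℕ) (h : m + i < n) :
    RmatCoeff n a b (r + i) q i * RmatCoeff n a c (r + (m + i)) (w + j) m *
        RmatCoeff n b c (q + j) w j =
      braidPrefactor n a b c (r + (m + i)) (q + j) w (m + j) (m + i) *
        (gaussBinom n (m + i) m * (gaussBinom n (q + j) j *
          xic n (-(m * (q + j + (m + i) - (m + j) - (2 * b - (q + j)))) - m * (m - 1) / 2) *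
            qdesc n (2 * b - q) i)) := by
  have binom : gaussBinom n (r + (m + i)) m * gaussBinom n (r + i) i =
      gaussBinom n (r + (m + i)) (m + i : ℕ) * gaussBinom n (m + i) m := by
    rw [add_comm m i, ← add_assoc, add_comm i m]
    exact gaussBinom_mul_gaussBinom r h
  have exps : xic n (RmatExp (a - (r + i)) (b - q) i) *
      xic n (RmatExp (a - (r + (m + i))) (c - (w + j)) m) *
        xic n (RmatExp (b - (q + j)) (c - w) j) =
      xic n (braidExp (a - (r + (m + i))) (b - (q + j)) (c - w) (m + j) (m + i)) *
        xic n (-(m * (q + j + (m + i) - (m + j) - (2 * b - (q + j)))) - m * (m - 1) / 2) := by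
    simp only [RmatExp, braidExp, ← xic_add]
    ring_nf
  simp only [RmatCoeff, braidPrefactor]
  rw [add_comm m j, qdesc_add n (2 * c - w) j m]
  push_cast at binom exps ⊢
  rw [sub_add_eq_sub_sub (2 * c), add_comm (j : ℂ) m]
  calc _ = (gaussBinom n (r + (m + i)) m * gaussBinom n (r + i) i) * gaussBinom n (q + j) j *
          (qdesc n (2 * c - w) j * qdesc n (2 * c - w - j) m) * qdesc n (2 * b - q) i *
          (xic n (RmatExp (a - (r + i)) (b - q) i) *
            xic n (RmatExp (a - (r + (m + i))) (c - (w + j)) m) *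
              xic n (RmatExp (b - (q + j)) (c - w) j)) := by ring
    _ = _ := by rw [binom, exps]; ring

lemma Rmat_mul_Rmat_mul_Rmat_left (a b c : ℂ) {p q r u v w x y z : Fin n} {m i j : ℕ}
    (hp : (p : ℕ) = y + j) (hq : (x : ℕ) = q + j) (hy : (y : ℕ) = w + m) (hz : (z : ℕ) = r + m)
    (hx : (x : ℕ) = v + i) (hu : (u : ℕ) = z + i) :
    Rmat n b c (p, q) (x, y) * Rmat n a c (y, r) (z, w) * Rmat n a b (x, z) (u, v) =
      braidPrefactor n a b c u v w (m + j) (m + i) *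
        (gaussBinom n (m + i) m * (gaussBinom n (v + i) j *
          xic n (m * (v + (m + i) - (m + j) - (2 * b - v)) - m * (m - 1) / 2) *
            qdesc n (2 * b - v) i)) := by
  rw [Rmat_apply b c hp hq, Rmat_apply a c hy hz, Rmat_apply a b hx hu, hx, hy, hu, hz, add_assoc]
  exact RmatCoeff_mul_left a b c v w r j (by omega)

lemma Rmat_mul_Rmat_mul_Rmat_right (a b c : ℂ) {p q r u v w x y z : Fin n} {m i j : ℕ}
    (hq : (q : ℕ) = z + i) (hy : (y : ℕ) = r + i) (hp : (p : ℕ) = x + m) (hu : (u : ℕ) = y + m)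
    (hx : (x : ℕ) = w + j) (hv : (v : ℕ) = z + j) :
    Rmat n a b (q, r) (y, z) * Rmat n a c (p, y) (u, x) * Rmat n b c (x, z) (v, w) =
      braidPrefactor n a b c u v w (m + j) (m + i) *
        (gaussBinom n (m + i) m * (gaussBinom n v j *
          xic n (-(m * (v + (m + i) - (m + j) - (2 * b - v))) - m * (m - 1) / 2) *
            qdesc n (2 * b - v + (m + j) - m) i)) := by
  have weight : 2 * b - (z + j) + (m + j) - m = 2 * b - z := by ring
  rw [Rmat_apply a b hq hy, Rmat_apply a c hp hu, Rmat_apply b c hx hv, hx, hu, hy, hv, add_assoc,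
    add_comm i m, RmatCoeff_mul_right a b c w z r j (by omega)]
  push_cast
  rw [weight]

theorem R12_mul_R23_mul_R12_apply_eq_braidSumLeft (a b c : ℂ) {p q r u v w : Fin n} {s t : ℕ}
    (hs : (p : ℕ) = w + s) (ht : (u : ℕ) = r + t) (hst : (q : ℕ) + s = v + t) :
    (R12 n b c * R23 n a c * R12 n a b) (p, q, r) (u, v, w) =
      braidPrefactor n a b c u v w s t * braidSumLeft n t v s (2 * b - v) := by
  rw [R12_mul_R23_mul_R12_apply, braidSumLeft, Finset.mul_sum]
  refine Finset.sum_bij_ne_zero (fun i _ _ ↦ ((i.2.1 : ℕ) - w, (i.1 : ℕ) - v)) ?_ ?_ ?_ ?_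
  · rintro ⟨x, y, z⟩ - h
    obtain ⟨⟨j, hp, hq⟩, ⟨m, hy, -⟩, i, hx, -⟩ := exists_of_Rmat_mul_Rmat_mul_Rmat_ne_zero h
    rw [HasAntidiagonal.mem_antidiagonal]
    dsimp only at *
    omega
  · rintro ⟨x, y, z⟩ - h ⟨x', y', z'⟩ - h' heq
    obtain ⟨⟨j, hp, hq⟩, ⟨m, hy, hz⟩, i, hx, -⟩ := exists_of_Rmat_mul_Rmat_mul_Rmat_ne_zero h
    obtain ⟨⟨j', hp', hq'⟩, ⟨m', hy', hz'⟩, i', hx', -⟩ :=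
      exists_of_Rmat_mul_Rmat_mul_Rmat_ne_zero h'
    simp only [Prod.mk.injEq, Fin.ext_iff] at heq ⊢
    dsimp only at *
    omega
  · rintro ⟨m, i⟩ hmi h
    obtain rfl : m + i = t := HasAntidiagonal.mem_antidiagonal.mp hmi
    have hbinom : gaussBinom n (v + i) (s - m) ≠ 0 := fun h₀ ↦ h (by simp [h₀])
    obtain ⟨j, hj, -⟩ := exists_eq_natCast_of_gaussBinom_ne_zero n hbinom
    obtain rfl : s = m + j := by omega
    have hvi : v + i < n := by
      by_contra hle
      exact hbinom (hj ▸ gaussBinom_eq_zero_of_le (by omega) (by omega) (by omega))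
    obtain ⟨x, hx⟩ : ∃ x : Fin n, (x : ℕ) = v + i := ⟨⟨v + i, hvi⟩, rfl⟩
    obtain ⟨y, hy⟩ : ∃ y : Fin n, (y : ℕ) = w + m := ⟨⟨w + m, by omega⟩, rfl⟩
    obtain ⟨z, hz⟩ : ∃ z : Fin n, (z : ℕ) = r + m := ⟨⟨r + m, by omega⟩, rfl⟩
    refine ⟨(x, y, z), mem_univ _, ?_, by simp [hx, hy]⟩
    rw [Rmat_mul_Rmat_mul_Rmat_left a b c (j := j) (by omega) (by omega) hy hz hx (by omega), ← hj]
    exact_mod_cast h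
  · rintro ⟨x, y, z⟩ - h
    obtain ⟨⟨j, hp, hq⟩, ⟨m, hy, hz⟩, i, hx, hu⟩ := exists_of_Rmat_mul_Rmat_mul_Rmat_ne_zero h
    obtain rfl : s = m + j := by omega
    obtain rfl : t = m + i := by omega
    rw [Rmat_mul_Rmat_mul_Rmat_left a b c hp hq hy hz hx hu, hx, hy, Nat.add_sub_cancel_left,
      Nat.add_sub_cancel_left]
    push_cast
    rw [add_sub_cancel_left]

theorem R23_mul_R12_mul_R23_apply_eq_braidSumRight (a b c : ℂ) {p q r u v w : Fin n} {s t : ℕ}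
    (hs : (p : ℕ) = w + s) (ht : (u : ℕ) = r + t) (hst : (q : ℕ) + s = v + t) :
    (R23 n a b * R12 n a c * R23 n b c) (p, q, r) (u, v, w) =
      braidPrefactor n a b c u v w s t * braidSumRight n t v s (2 * b - v) := by
  rw [R23_mul_R12_mul_R23_apply, braidSumRight, Finset.mul_sum]
  refine Finset.sum_bij_ne_zero (fun i _ _ ↦ ((p : ℕ) - i.1, (i.2.1 : ℕ) - r)) ?_ ?_ ?_ ?_
  · rintro ⟨x, y, z⟩ - h
    obtain ⟨⟨i, hq, hy⟩, ⟨m, hp, hu⟩, -⟩ := exists_of_Rmat_mul_Rmat_mul_Rmat_ne_zero h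
    rw [HasAntidiagonal.mem_antidiagonal]
    dsimp only at *
    omega
  · rintro ⟨x, y, z⟩ - h ⟨x', y', z'⟩ - h' heq
    obtain ⟨⟨i, hq, hy⟩, ⟨m, hp, hu⟩, j, hx, -⟩ := exists_of_Rmat_mul_Rmat_mul_Rmat_ne_zero h
    obtain ⟨⟨i', hq', hy'⟩, ⟨m', hp', hu'⟩, j', hx', -⟩ :=
      exists_of_Rmat_mul_Rmat_mul_Rmat_ne_zero h'
    simp only [Prod.mk.injEq, Fin.ext_iff] at heq ⊢
    dsimp only at *
    omega
  · rintro ⟨m, i⟩ hmi h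
    obtain rfl : m + i = t := HasAntidiagonal.mem_antidiagonal.mp hmi
    have hbinom : gaussBinom n v (s - m) ≠ 0 := fun h₀ ↦ h (by simp [h₀])
    obtain ⟨j, hj, hjv⟩ := exists_eq_natCast_of_gaussBinom_ne_zero n hbinom
    obtain rfl : s = m + j := by omega
    obtain ⟨x, hx⟩ : ∃ x : Fin n, (x : ℕ) = w + j := ⟨⟨w + j, by omega⟩, rfl⟩
    obtain ⟨y, hy⟩ : ∃ y : Fin n, (y : ℕ) = r + i := ⟨⟨r + i, by omega⟩, rfl⟩
    obtain ⟨z, hz⟩ : ∃ z : Fin n, (z : ℕ) = v - j := ⟨⟨v - j, by omega⟩, rfl⟩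
    refine ⟨(x, y, z), mem_univ _, ?_, Prod.ext (by dsimp only; omega) (by dsimp only; omega)⟩
    have hp : (p : ℕ) = x + m := by omega
    have hv : (v : ℕ) = z + j := by omega
    rw [Rmat_mul_Rmat_mul_Rmat_right a b c (by omega) hy hp (by omega) hx hv, ← hj]
    exact_mod_cast h
  · rintro ⟨x, y, z⟩ - h
    obtain ⟨⟨i, hq, hy⟩, ⟨m, hp, hu⟩, j, hx, hv⟩ := exists_of_Rmat_mul_Rmat_mul_Rmat_ne_zero h
    obtain rfl : s = m + j := by omega
    obtain rfl : t = m + i := by omega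
    rw [Rmat_mul_Rmat_mul_Rmat_right a b c hq hy hp hu hx hv, hp, hy, Nat.add_sub_cancel_left,
      Nat.add_sub_cancel_left]
    push_cast
    rw [add_sub_cancel_left]

lemma R12_mul_R23_mul_R12_apply_eq_zero (a₁ b₁ a₂ b₂ a₃ b₃ : ℂ) {p q r u v w : Fin n}
    (h : ¬((p : ℕ) + q + r = u + v + w ∧ (w : ℕ) ≤ p ∧ (r : ℕ) ≤ u)) :
    (R12 n a₁ b₁ * R23 n a₂ b₂ * R12 n a₃ b₃) (p, q, r) (u, v, w) = 0 := by
  rw [R12_mul_R23_mul_R12_apply]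
  refine Finset.sum_eq_zero fun ⟨x, y, z⟩ _ ↦ ?_
  by_contra hi
  have := exists_of_Rmat_mul_Rmat_mul_Rmat_ne_zero hi
  omega

lemma R23_mul_R12_mul_R23_apply_eq_zero (a₁ b₁ a₂ b₂ a₃ b₃ : ℂ) {p q r u v w : Fin n}
    (h : ¬((p : ℕ) + q + r = u + v + w ∧ (w : ℕ) ≤ p ∧ (r : ℕ) ≤ u)) :
    (R23 n a₁ b₁ * R12 n a₂ b₂ * R23 n a₃ b₃) (p, q, r) (u, v, w) = 0 := by
  rw [R23_mul_R12_mul_R23_apply]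
  refine Finset.sum_eq_zero fun ⟨x, y, z⟩ _ ↦ ?_
  by_contra hi
  have := exists_of_Rmat_mul_Rmat_mul_Rmat_ne_zero hi
  omega

end MatrixEntries

theorem Rmat_yang_baxter_general (n : ℕ) (a b c : ℂ) :
    R12 n b c * R23 n a c * R12 n a b = R23 n a b * R12 n a c * R23 n b c := by
  ext ⟨p, q, r⟩ ⟨u, v, w⟩
  by_cases h : (p : ℕ) + q + r = u + v + w ∧ (w : ℕ) ≤ p ∧ (r : ℕ) ≤ u
  · obtain ⟨hsum, hwp, hru⟩ := h
    obtain ⟨s, hs⟩ := Nat.exists_eq_add_of_le hwp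
    obtain ⟨t, ht⟩ := Nat.exists_eq_add_of_le hru
    have hst : (q : ℕ) + s = v + t := by omega
    rw [R12_mul_R23_mul_R12_apply_eq_braidSumLeft a b c hs ht hst,
      R23_mul_R12_mul_R23_apply_eq_braidSumRight a b c hs ht hst, braidSumLeft_eq_braidSumRight]
  · rw [R12_mul_R23_mul_R12_apply_eq_zero _ _ _ _ _ _ h,
      R23_mul_R12_mul_R23_apply_eq_zero _ _ _ _ _ _ h]

theorem Rmat_yang_baxter (n : ℕ) (hn : 2 ≤ n) (a b c : ℂ)
    (ha : NotHalfInt a) (hb : NotHalfInt b) (hc : NotHalfInt c) :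
    R12 n b c * R23 n a c * R12 n a b = R23 n a b * R12 n a c * R23 n b c :=
  Rmat_yang_baxter_general n a b c

end
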